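/- Under the LCC setup, for every m, every bounded linear operator L : X_m → X_m with ‖L‖ = 1, and every j ≥ 1, one has w_{m+j}(L) ≤ ν(ι ∘ L ∘ Q_m), where ν(ι ∘ L ∘ Q_m) is the numerical radius in X of the operator x ↦ L(Q_m x) (regarded as an operator on X via the inclusion ι : X_m ⊆ X). -/

import Mathlib

open Filter Topology

variable {X : Type*} [NormedAddCommGroup X] [NormedSpace ℝ X]

/-- The numerical radius of a bounded linear operator on a real normed space. -/
noncomputable def nu {Z : Type*} [NormedAddCommGroup Z] [NormedSpace ℝ Z] (T : Z →L[ℝ] Z) : ℝ :=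
  sSup {r : ℝ | ∃ (x : Z) (f : Z →L[ℝ] ℝ), ‖x‖ = 1 ∧ ‖f‖ = 1 ∧ f x = 1 ∧ r = |f (T x)|}

/-- The numerical index of a real normed space. -/
noncomputable def nIndex (Z : Type*) [NormedAddCommGroup Z] [NormedSpace ℝ Z] : ℝ :=
  sInf {r : ℝ | ∃ T : Z →L[ℝ] Z, ‖T‖ = 1 ∧ r = nu T}

/-- The (continuous) inclusion map between nested submodules. -/
noncomputable def incl {p q : Submodule ℝ X} (h : p ≤ q) : p →L[ℝ] q :=
  (Submodule.inclusion h).mkContinuous 1 (fun x => by rw [one_mul]; exact le_of_eq rfl)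

/-- `QQ Xm P m j = Q_{m,j} = P_m ∘ P_{m+1} ∘ ⋯ ∘ P_{m+j-1} : X_{m+j} → X_m`
(with `Q_{m,0} = id`). -/
noncomputable def QQ (Xm : ℕ → Submodule ℝ X) (P : ∀ m, Xm (m + 1) →L[ℝ] Xm m) (m : ℕ) :
    ∀ j, Xm (m + j) →L[ℝ] Xm m
  | 0 => ContinuousLinearMap.id ℝ (Xm m)
  | (j + 1) => (QQ Xm P m j).comp (P (m + j))

/-- `w Xm hmono P m j L = w_{m+j}(L) = ν(ι ∘ L ∘ Q_{m,j})`, the numerical radius in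
`X_{m+j}` of the operator `x ↦ L (Q_{m,j} x)`. -/
noncomputable def w (Xm : ℕ → Submodule ℝ X) (hmono : Monotone Xm)
    (P : ∀ m, Xm (m + 1) →L[ℝ] Xm m) (m j : ℕ) (L : Xm m →L[ℝ] Xm m) : ℝ :=
  nu ((incl (hmono (Nat.le_add_right m j))).comp (L.comp (QQ Xm P m j)))

/-- The Local Characterization Condition (LCC): for every `m`, every norming functional
`f ∈ X_{m+1}*` of a unit vector `x ∈ X_{m+1}`, some multiple of `f` restricted to `X_m`
is a norming functional for `P_m x` in `X_m*`. -/
def LCC (Xm : ℕ → Submodule ℝ X) (hmono : Monotone Xm)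
    (P : ∀ m, Xm (m + 1) →L[ℝ] Xm m) : Prop :=
  ∀ (m : ℕ) (x : Xm (m + 1)) (f : Xm (m + 1) →L[ℝ] ℝ), ‖x‖ = 1 → ‖f‖ = 1 → f x = 1 →
    ∃ b : ℝ, ‖b • f.comp (incl (hmono (Nat.le_succ m)))‖ = 1 ∧
      b * f (incl (hmono (Nat.le_succ m)) (P m x)) = ‖P m x‖

theorem QQ_stable (Xm : ℕ → Submodule ℝ X) (hmono : Monotone Xm)
    (P : ∀ m, Xm (m + 1) →L[ℝ] Xm m)
    (hPid : ∀ (m : ℕ) (y : Xm (m + 1)), (y : X) ∈ Xm m → ((P m y : Xm m) : X) = (y : X))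
    (m j : ℕ) (x : X) (hx : x ∈ Xm (m + j)) (i : ℕ) (hi : j ≤ i) :
    ∀ h : x ∈ Xm (m + i), QQ Xm P m i ⟨x, h⟩ = QQ Xm P m j ⟨x, hx⟩ := by
  induction i, hi using Nat.le_induction with
  | base => intro h; rfl
  | succ i hi ih =>
    intro h
    have hxi : x ∈ Xm (m + i) := hmono (by omega) hx
    have e : P (m + i) ⟨x, h⟩ = ⟨x, hxi⟩ := Subtype.ext (hPid (m + i) ⟨x, h⟩ hxi)
    rw [← ih hxi, ← e]
    rfl

/-- Under the LCC setup, for every `m`, every norm-one operator `L : X_m → X_m` and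
every `j ≥ 1`, one has `w_{m+j}(L) ≤ ν(ι ∘ L ∘ Q_m)`, the numerical radius in `X`
of `x ↦ L (Q_m x)`. -/
theorem stmt12 [CompleteSpace X]
    (Xm : ℕ → Submodule ℝ X) (hmono : Monotone Xm)
    (hclosed : ∀ m, IsClosed (Xm m : Set X))
    (hdense : Dense (⋃ m, (Xm m : Set X)))
    (P : ∀ m, Xm (m + 1) →L[ℝ] Xm m)
    (hPnorm : ∀ m, ‖P m‖ = 1)
    (hPid : ∀ (m : ℕ) (y : Xm (m + 1)), (y : X) ∈ Xm m → ((P m y : Xm m) : X) = (y : X))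
    (m : ℕ) (Qm : X →L[ℝ] Xm m) (hQnorm : ‖Qm‖ = 1)
    (hQid : ∀ x : X, x ∈ Xm m → ((Qm x : X) = x))
    (hQlim : ∀ (k : ℕ) (x : X), x ∈ Xm k → ∃ J : ℕ, ∀ j, J ≤ j →
      ∃ h : x ∈ Xm (m + j), QQ Xm P m j ⟨x, h⟩ = Qm x)
    (L : Xm m →L[ℝ] Xm m) (hL : ‖L‖ = 1) :
    ∀ j : ℕ, 1 ≤ j →
      w Xm hmono P m j L ≤ nu ((Xm m).subtypeL.comp (L.comp Qm)) := by
  intro j _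
  unfold w
  set T : X →L[ℝ] X := (Xm m).subtypeL.comp (L.comp Qm) with hT
  have hQ : ∀ x : Xm (m + j), QQ Xm P m j x = Qm (x : X) := by
    rintro ⟨x, hx⟩
    obtain ⟨J, hJ⟩ := hQlim (m + j) x hx
    obtain ⟨h, e⟩ := hJ (max J j) (le_max_left _ _)
    rw [← QQ_stable Xm hmono P hPid m j x hx (max J j) (le_max_right _ _) h, e]
  have hbdd : BddAbove {r : ℝ | ∃ (x : X) (f : X →L[ℝ] ℝ),
      ‖x‖ = 1 ∧ ‖f‖ = 1 ∧ f x = 1 ∧ r = |f (T x)|} := by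
    refine ⟨‖T‖, ?_⟩
    rintro r ⟨x, f, hx, hf, -, rfl⟩
    have h1 := f.le_opNorm (T x)
    have h2 := T.le_opNorm x
    rw [hf, one_mul, Real.norm_eq_abs] at h1
    rw [hx, mul_one] at h2
    exact h1.trans h2
  refine Real.sSup_le ?_ ?_
  · rintro r ⟨x, f, hx, hf, hfx, rfl⟩
    obtain ⟨g, hg, hgn⟩ := exists_extension_norm_eq (Xm (m + j)) f
    refine le_csSup hbdd ⟨(x : X), g, hx, hgn.trans hf, (hg x).trans hfx, ?_⟩
    rw [← hg]
    simp only [ContinuousLinearMap.comp_apply, hQ, hT]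
    rfl
  · refine Real.sSup_nonneg ?_
    rintro r ⟨x, f, -, -, -, rfl⟩
    exact abs_nonneg _
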